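/- For every j ∈ {1, …, n}: v_j(0) = 0, v_j is twice continuously differentiable on (0, ∞), and the eigenvalue equation −v_j″(r) + V(r) v_j(r) = μ_j² v_j(r) holds for every r > 0. -/

import Mathlib

open Matrix MeasureTheory

/-!
Put `M = A + G` and let `s'' = q s - Λ s`, where here `q = 0` and `Λ = Diag(μ₁², …, μₙ²)`. Since
`M' = s sᵀ`, the map `u ↦ T u := -M⁻¹ u` obeys `(T u)' = (s ⬝ T u) T s + T u'`. Hence `v = T s` and
`w = T s'` satisfy a closed first-order system with `v' = (s ⬝ v) v + w`, in which the remaining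
term `T (Λ s)` is known because `Λ M - M Λᵀ` is the Wronskian matrix `s s'ᵀ - s' sᵀ`: both have the
same derivative and they agree at `0`. Differentiating `v'` once more, every term except
`(q + 2 (s ⬝ v)') v - Λᵀ v` cancels.
-/

section Calculus

variable {𝕜 ι m n R E : Type*} [NontriviallyNormedField 𝕜]

theorem contDiffOn_two_of_hasDerivAt [NormedAddCommGroup E] [NormedSpace 𝕜 E] {U : Set 𝕜}
    {f f' f'' : 𝕜 → E} (hU : IsOpen U) (hf : ∀ r ∈ U, HasDerivAt f (f' r) r)
    (hf' : ∀ r ∈ U, HasDerivAt f' (f'' r) r) (hf'' : ContinuousOn f'' U) :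
    ContDiffOn 𝕜 2 f U := by
  have hf'_one : ContDiffOn 𝕜 1 f' U := by
    rw [← zero_add 1, contDiffOn_succ_iff_deriv_of_isOpen hU, contDiffOn_zero]
    exact ⟨fun r hr => (hf' r hr).differentiableAt.differentiableWithinAt, by simp,
      hf''.congr fun r hr => (hf' r hr).deriv⟩
  rw [← one_add_one_eq_two, contDiffOn_succ_iff_deriv_of_isOpen hU]
  exact ⟨fun r hr => (hf r hr).differentiableAt.differentiableWithinAt, by simp,
    hf'_one.congr fun r hr => (hf r hr).deriv⟩

theorem deriv_deriv_eq_of_hasDerivAt [NormedAddCommGroup E] [NormedSpace 𝕜 E] {U : Set 𝕜}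
    {f f' : 𝕜 → E} {f'' : E} {r : 𝕜} (hU : IsOpen U) (hr : r ∈ U)
    (hf : ∀ t ∈ U, HasDerivAt f (f' t) t) (hf' : HasDerivAt f' f'' r) :
    deriv (deriv f) r = f'' := by
  have hderiv : deriv f =ᶠ[nhds r] f' := by
    filter_upwards [hU.mem_nhds hr] with t ht using (hf t ht).deriv
  exact hderiv.deriv_eq.trans hf'.deriv

theorem deriv_deriv_pi_apply [Fintype ι] [NormedAddCommGroup E] [NormedSpace 𝕜 E] {U : Set 𝕜}
    {f : 𝕜 → ι → E} {r : 𝕜} (hU : IsOpen U) (hr : r ∈ U) (hf : ContDiffOn 𝕜 2 f U) (i : ι) :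
    deriv (deriv fun t => f t i) r = deriv (deriv f) r i := by
  rw [← one_add_one_eq_two, contDiffOn_succ_iff_deriv_of_isOpen hU] at hf
  obtain ⟨hf_diff, -, hf'⟩ := hf
  refine deriv_deriv_eq_of_hasDerivAt hU hr (f' := fun t => deriv f t i) (fun t ht => ?_) ?_
  · exact hasDerivAt_pi.1 (hf_diff.hasDerivAt (hU.mem_nhds ht)) i
  · exact hasDerivAt_pi.1 ((hf'.differentiableOn one_ne_zero).hasDerivAt (hU.mem_nhds hr)) i

theorem hasDerivAt_matrix [Finite n] [NormedAddCommGroup E] [NormedSpace 𝕜 E]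
    {M : 𝕜 → Matrix m n E} {M' : Matrix m n E} {r : 𝕜} :
    HasDerivAt M M' r ↔ ∀ i j, HasDerivAt (fun t => M t i j) (M' i j) r := by
  have := Fintype.ofFinite n
  exact hasDerivAt_pi.trans (forall_congr' fun _ => hasDerivAt_pi)

variable [NormedCommRing R] [NormedAlgebra 𝕜 R] {r : 𝕜}

theorem hasDerivAt_vecMulVec [Finite n] {x : 𝕜 → m → R} {y : 𝕜 → n → R} {x' : m → R}
    {y' : n → R} (hx : HasDerivAt x x' r) (hy : HasDerivAt y y' r) :
    HasDerivAt (fun t => vecMulVec (x t) (y t)) (vecMulVec x' (y r) + vecMulVec (x r) y') r :=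
  hasDerivAt_matrix.2 fun i j => (hasDerivAt_pi.1 hx i).fun_mul (hasDerivAt_pi.1 hy j)

theorem hasDerivAt_dotProduct [Fintype n] {x y : 𝕜 → n → R} {x' y' : n → R}
    (hx : HasDerivAt x x' r) (hy : HasDerivAt y y' r) :
    HasDerivAt (fun t => x t ⬝ᵥ y t) (x' ⬝ᵥ y r + x r ⬝ᵥ y') r := by
  rw [hasDerivAt_pi] at hx hy
  simpa only [dotProduct, Finset.sum_add_distrib] using
    HasDerivAt.fun_sum fun i (_ : i ∈ Finset.univ) => (hx i).fun_mul (hy i)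

theorem hasDerivAt_mulVec [Fintype n] {M : 𝕜 → Matrix m n R} {M' : Matrix m n R} {x : 𝕜 → n → R}
    {x' : n → R} (hM : HasDerivAt M M' r) (hx : HasDerivAt x x' r) :
    HasDerivAt (fun t => M t *ᵥ x t) (M' *ᵥ x r + M r *ᵥ x') r :=
  hasDerivAt_pi.2 fun i => hasDerivAt_dotProduct (hasDerivAt_pi.1 hM i) hx

theorem hasDerivAt_nonsing_inv [Fintype n] [DecidableEq n] [CompleteSpace R]
    {M : 𝕜 → Matrix n n R} {M' : Matrix n n R} (hM : HasDerivAt M M' r) (hr : IsUnit (M r)) :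
    HasDerivAt (fun t => (M t)⁻¹) (-((M r)⁻¹ * M' * (M r)⁻¹)) r := by
  let : NormedRing (Matrix n n R) := Matrix.linftyOpNormedRing
  let : NormedAlgebra 𝕜 (Matrix n n R) := Matrix.linftyOpNormedAlgebra
  -- The uniformity of the `L∞`-operator norm is not syntactically that of `n → n → R`.
  have : @CompleteSpace (Matrix n n R) PseudoMetricSpace.toUniformSpace :=
    inferInstanceAs (CompleteSpace (n → n → R))
  obtain ⟨u, hu⟩ := hr
  have hinverse := (hu ▸ hasFDerivAt_ringInverse (𝕜 := 𝕜) u).comp_hasDerivAt r hM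
  simp only [Matrix.nonsing_inv_eq_ringInverse]
  exact hinverse.congr_deriv (by simp [← hu])

end Calculus

theorem commutator_eq_wronskian {𝕜 ι R : Type*} [Fintype ι] [RCLike 𝕜]
    [NormedCommRing R] [NormedAlgebra 𝕜 R] {M : 𝕜 → Matrix ι ι R} {s s' : 𝕜 → ι → R} {q : 𝕜 → R}
    {Λ : Matrix ι ι R} {U : Set 𝕜} {r₀ : 𝕜} (hU : IsOpen U) (hU_conn : IsPreconnected U)
    (hM : ∀ r ∈ U, HasDerivAt M (vecMulVec (s r) (s r)) r) (hs : ∀ r ∈ U, HasDerivAt s (s' r) r)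
    (hs' : ∀ r ∈ U, HasDerivAt s' (q r • s r - Λ *ᵥ s r) r) (hr₀ : r₀ ∈ U)
    (h₀ : Λ * M r₀ - M r₀ * Λᵀ = vecMulVec (s r₀) (s' r₀) - vecMulVec (s' r₀) (s r₀)) :
    Set.EqOn (fun r => Λ * M r - M r * Λᵀ)
      (fun r => vecMulVec (s r) (s' r) - vecMulVec (s' r) (s r)) U := by
  classical
  let : NormedRing (Matrix ι ι R) := Matrix.linftyOpNormedRing
  let : NormedAlgebra 𝕜 (Matrix ι ι R) := Matrix.linftyOpNormedAlgebra
  have hcommutator r (hr : r ∈ U) : HasDerivAt (fun t => Λ * M t - M t * Λᵀ)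
      (Λ * vecMulVec (s r) (s r) - vecMulVec (s r) (s r) * Λᵀ) r :=
    ((hM r hr).const_mul Λ).fun_sub ((hM r hr).mul_const Λᵀ)
  have hwronskian r (hr : r ∈ U) :
      HasDerivAt (fun t => vecMulVec (s t) (s' t) - vecMulVec (s' t) (s t))
        (Λ * vecMulVec (s r) (s r) - vecMulVec (s r) (s r) * Λᵀ) r := by
    refine ((hasDerivAt_vecMulVec (hs r hr) (hs' r hr)).fun_sub
      (hasDerivAt_vecMulVec (hs' r hr) (hs r hr))).congr_deriv ?_
    rw [mul_vecMulVec, vecMulVec_mul, vecMul_transpose, vecMulVec_sub, sub_vecMulVec,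
      vecMulVec_smul, smul_vecMulVec]
    abel
  exact hU.eqOn_of_deriv_eq hU_conn
    (fun r hr => (hcommutator r hr).differentiableAt.differentiableWithinAt)
    (fun r hr => (hwronskian r hr).differentiableAt.differentiableWithinAt)
    (fun r hr => (hcommutator r hr).deriv.trans (hwronskian r hr).deriv.symm) hr₀ h₀

section GramTransform

variable {𝕜 ι R : Type*} [Fintype ι] [DecidableEq ι]

/-- The Gram transform `r ↦ -M(r)⁻¹ u(r)` of a vector function `u`: with `M = A + ∫ s sᵀ` it turns
a vector `s` of solutions of a Schrödinger equation into solutions for a new potential. It is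
meaningful only where `M r` is invertible. -/
noncomputable def gramTransform [CommRing R] (M : 𝕜 → Matrix ι ι R) (u : 𝕜 → ι → R) (r : 𝕜) :
    ι → R :=
  -((M r)⁻¹ *ᵥ u r)

section Algebra

variable [CommRing R] {M : 𝕜 → Matrix ι ι R} {r : 𝕜}

theorem mulVec_gramTransform (hr : IsUnit (M r)) (u : 𝕜 → ι → R) :
    M r *ᵥ gramTransform M u r = -u r := by
  rw [gramTransform, mulVec_neg, mulVec_mulVec,
    mul_nonsing_inv _ ((isUnit_iff_isUnit_det _).1 hr), one_mulVec]

theorem gramTransform_eq_of_mulVec_eq_neg {u : 𝕜 → ι → R} {x : ι → R} (hr : IsUnit (M r))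
    (hx : M r *ᵥ x = -u r) : gramTransform M u r = x :=
  mulVec_injective_of_isUnit hr ((mulVec_gramTransform hr u).trans hx.symm)

theorem gramTransform_smul_sub_mulVec_of_commutator {s s' : 𝕜 → ι → R} {Λ : Matrix ι ι R}
    (q : 𝕜 → R) (hr : IsUnit (M r))
    (hcomm : Λ * M r - M r * Λᵀ = vecMulVec (s r) (s' r) - vecMulVec (s' r) (s r)) :
    gramTransform M (fun t => q t • s t - Λ *ᵥ s t) r =
      (q r + s' r ⬝ᵥ gramTransform M s r) • gramTransform M s r
        - (s r ⬝ᵥ gramTransform M s r) • gramTransform M s' r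
        - Λᵀ *ᵥ gramTransform M s r := by
  set v := gramTransform M s r
  have hv : M r *ᵥ v = -s r := mulVec_gramTransform hr s
  have hcomm_v : Λ *ᵥ (-s r) - M r *ᵥ (Λᵀ *ᵥ v) = (s' r ⬝ᵥ v) • s r - (s r ⬝ᵥ v) • s' r := by
    simpa only [sub_mulVec, vecMulVec_mulVec, op_smul_eq_smul, ← mulVec_mulVec, hv] using
      congrArg (· *ᵥ v) hcomm
  refine gramTransform_eq_of_mulVec_eq_neg hr ?_
  rw [mulVec_sub, mulVec_sub, mulVec_smul, mulVec_smul, hv, mulVec_gramTransform hr,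
    eq_sub_of_add_eq' (sub_eq_iff_eq_add.1 hcomm_v).symm, mulVec_neg]
  module

end Algebra

section Derivative

variable [NontriviallyNormedField 𝕜] [NormedCommRing R] [NormedAlgebra 𝕜 R]
  {M : 𝕜 → Matrix ι ι R} {s s' : 𝕜 → ι → R} {q : 𝕜 → R} {Λ : Matrix ι ι R} {U : Set 𝕜} {r : 𝕜}

theorem hasDerivAt_gramTransform [CompleteSpace R] {x y u u' : 𝕜 → ι → R}
    (hM : HasDerivAt M (vecMulVec (x r) (y r)) r) (hu : HasDerivAt u (u' r) r)
    (hr : IsUnit (M r)) :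
    HasDerivAt (gramTransform M u)
      ((y r ⬝ᵥ gramTransform M u r) • gramTransform M x r + gramTransform M u' r) r := by
  refine (hasDerivAt_mulVec (hasDerivAt_nonsing_inv hM hr) hu).fun_neg.congr_deriv ?_
  simp only [gramTransform, neg_mulVec, ← mulVec_mulVec, vecMulVec_mulVec, op_smul_eq_smul,
    mulVec_smul, dotProduct_neg]
  module

theorem hasDerivAt_dotProduct_gramTransform [CompleteSpace R]
    (hM : HasDerivAt M (vecMulVec (s r) (s r)) r) (hs : HasDerivAt s (s' r) r)
    (hr : IsUnit (M r)) :
    HasDerivAt (fun t => s t ⬝ᵥ gramTransform M s t)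
      (s' r ⬝ᵥ gramTransform M s r + (s r ⬝ᵥ gramTransform M s r) ^ 2
        + s r ⬝ᵥ gramTransform M s' r) r := by
  refine (hasDerivAt_dotProduct hs (hasDerivAt_gramTransform hM hs hr)).congr_deriv ?_
  rw [dotProduct_add, dotProduct_smul, smul_eq_mul]
  ring

theorem hasDerivAt_deriv_gramTransform [CompleteSpace R]
    (hM : HasDerivAt M (vecMulVec (s r) (s r)) r) (hs : HasDerivAt s (s' r) r)
    (hs' : HasDerivAt s' (q r • s r - Λ *ᵥ s r) r)
    (hcomm : Λ * M r - M r * Λᵀ = vecMulVec (s r) (s' r) - vecMulVec (s' r) (s r))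
    (hr : IsUnit (M r)) :
    HasDerivAt (fun t => (s t ⬝ᵥ gramTransform M s t) • gramTransform M s t + gramTransform M s' t)
      ((q r + 2 * deriv (fun t => s t ⬝ᵥ gramTransform M s t) r) • gramTransform M s r
        - Λᵀ *ᵥ gramTransform M s r) r := by
  have hv := hasDerivAt_gramTransform hM hs hr
  have hw := hasDerivAt_gramTransform (u' := fun t => q t • s t - Λ *ᵥ s t) hM hs' hr
  have hsv := hasDerivAt_dotProduct_gramTransform hM hs hr
  refine ((hsv.fun_smul hv).fun_add hw).congr_deriv ?_
  rw [gramTransform_smul_sub_mulVec_of_commutator q hr hcomm, hsv.deriv]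
  module

theorem contDiffOn_two_gramTransform [CompleteSpace R] (hU : IsOpen U)
    (hM : ∀ r ∈ U, HasDerivAt M (vecMulVec (s r) (s r)) r) (hs : ∀ r ∈ U, HasDerivAt s (s' r) r)
    (hs' : ∀ r ∈ U, HasDerivAt s' (q r • s r - Λ *ᵥ s r) r) (hq : ContinuousOn q U)
    (hcomm : ∀ r ∈ U, Λ * M r - M r * Λᵀ = vecMulVec (s r) (s' r) - vecMulVec (s' r) (s r))
    (hunit : ∀ r ∈ U, IsUnit (M r)) :
    ContDiffOn 𝕜 2 (gramTransform M s) U := by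
  have hv r (hr : r ∈ U) := hasDerivAt_gramTransform (hM r hr) (hs r hr) (hunit r hr)
  refine contDiffOn_two_of_hasDerivAt hU hv (fun r hr => hasDerivAt_deriv_gramTransform (hM r hr)
    (hs r hr) (hs' r hr) (hcomm r hr) (hunit r hr)) ?_
  have hv_cont : ContinuousOn (gramTransform M s) U := fun r hr =>
    (hv r hr).continuousAt.continuousWithinAt
  have hw_cont : ContinuousOn (gramTransform M s') U := fun r hr =>
    (hasDerivAt_gramTransform (u' := fun t => q t • s t - Λ *ᵥ s t) (hM r hr) (hs' r hr)
      (hunit r hr)).continuousAt.continuousWithinAt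
  have hs_cont : ContinuousOn s U := fun r hr => (hs r hr).continuousAt.continuousWithinAt
  have hs'_cont : ContinuousOn s' U := fun r hr => (hs' r hr).continuousAt.continuousWithinAt
  have hsv_deriv_cont : ContinuousOn (deriv fun t => s t ⬝ᵥ gramTransform M s t) U := by
    refine ContinuousOn.congr (f := fun t => s' t ⬝ᵥ gramTransform M s t
      + (s t ⬝ᵥ gramTransform M s t) ^ 2 + s t ⬝ᵥ gramTransform M s' t) ?_ fun r hr =>
        (hasDerivAt_dotProduct_gramTransform (hM r hr) (hs r hr) (hunit r hr)).deriv
    simp only [dotProduct]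
    fun_prop
  fun_prop

theorem gramTransform_eigenvalue_equation [CompleteSpace R] (hU : IsOpen U)
    (hM : ∀ r ∈ U, HasDerivAt M (vecMulVec (s r) (s r)) r) (hs : ∀ r ∈ U, HasDerivAt s (s' r) r)
    (hs' : HasDerivAt s' (q r • s r - Λ *ᵥ s r) r)
    (hcomm : Λ * M r - M r * Λᵀ = vecMulVec (s r) (s' r) - vecMulVec (s' r) (s r))
    (hunit : ∀ r ∈ U, IsUnit (M r)) (hr : r ∈ U) :
    -deriv (deriv (gramTransform M s)) r
        + (q r + 2 * deriv (fun t => s t ⬝ᵥ gramTransform M s t) r) • gramTransform M s r =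
      Λᵀ *ᵥ gramTransform M s r := by
  rw [deriv_deriv_eq_of_hasDerivAt hU hr
    (fun t ht => hasDerivAt_gramTransform (hM t ht) (hs t ht) (hunit t ht))
    (hasDerivAt_deriv_gramTransform (hM r hr) (hs r hr) hs' hcomm (hunit r hr))]
  abel

end Derivative

end GramTransform

section Sine

variable {ι : Type*} (μ : ι → ℝ)

/-- The vector `s(r)` with components `sin (μ i * r)`, with complex entries. -/
noncomputable def sineVector (r : ℝ) (i : ι) : ℂ := (Real.sin (μ i * r) : ℝ)

/-- The entrywise derivative of `sineVector μ`. -/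
noncomputable def sineVectorDeriv (r : ℝ) (i : ι) : ℂ := (μ i * Real.cos (μ i * r) : ℝ)

/-- The Gram matrix `G(r) = ∫₀^r s sᵀ` of `s = sineVector μ`. -/
noncomputable def sineGram (r : ℝ) : Matrix ι ι ℂ :=
  of fun i j => (∫ ρ in (0 : ℝ)..r, Real.sin (μ i * ρ) * Real.sin (μ j * ρ) : ℝ)

@[simp]
theorem sineVector_zero : sineVector μ 0 = 0 := by
  ext; simp [sineVector]

@[simp]
theorem sineGram_zero : sineGram μ 0 = 0 := by
  ext; simp [sineGram]

variable (r : ℝ)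

theorem hasDerivAt_sineVector : HasDerivAt (sineVector μ) (sineVectorDeriv μ r) r :=
  hasDerivAt_pi.2 fun i => by
    simpa [sineVector, sineVectorDeriv, mul_comm] using
      ((hasDerivAt_id r).const_mul (μ i)).sin.ofReal_comp

theorem hasDerivAt_sineVectorDeriv [Fintype ι] [DecidableEq ι] :
    HasDerivAt (sineVectorDeriv μ)
      (-(diagonal (fun i => (μ i : ℂ) ^ 2) *ᵥ sineVector μ r)) r :=
  hasDerivAt_pi.2 fun i => by
    refine (((hasDerivAt_id r).const_mul (μ i)).cos.const_mul (μ i)).ofReal_comp.congr_deriv ?_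
    simp only [sineVector, id, Pi.neg_apply, mulVec_diagonal]
    push_cast
    ring

theorem hasDerivAt_add_sineGram [Finite ι] (A : Matrix ι ι ℂ) :
    HasDerivAt (fun t => A + sineGram μ t) (vecMulVec (sineVector μ r) (sineVector μ r)) r :=
  hasDerivAt_matrix.2 fun i j => by
    have hcont : Continuous fun ρ => Real.sin (μ i * ρ) * Real.sin (μ j * ρ) := by fun_prop
    simpa only [Matrix.add_apply, sineGram, of_apply, vecMulVec_apply, sineVector,
      Complex.ofReal_mul] using
        (hcont.integral_hasStrictDerivAt 0 r).hasDerivAt.ofReal_comp.const_add (A i j)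

theorem commutator_add_sineGram [Fintype ι] [DecidableEq ι] {A : Matrix ι ι ℂ}
    (hA : Commute (diagonal fun i => (μ i : ℂ) ^ 2) A) :
    (diagonal fun i => (μ i : ℂ) ^ 2) * (A + sineGram μ r)
        - (A + sineGram μ r) * (diagonal fun i => (μ i : ℂ) ^ 2)ᵀ =
      vecMulVec (sineVector μ r) (sineVectorDeriv μ r)
        - vecMulVec (sineVectorDeriv μ r) (sineVector μ r) := by
  refine commutator_eq_wronskian (M := fun t => A + sineGram μ t) (q := 0) (r₀ := 0) isOpen_univ
    isPreconnected_univ (fun t _ => hasDerivAt_add_sineGram μ t A)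
    (fun t _ => hasDerivAt_sineVector μ t)
    (fun t _ => by simpa using hasDerivAt_sineVectorDeriv μ t) (Set.mem_univ _) ?_
    (Set.mem_univ r)
  simp [hA.eq]

end Sine

theorem stmt_12_general {ι : Type*} [Fintype ι] [DecidableEq ι] (μ : ι → ℝ)
    (G : ℝ → Matrix ι ι ℂ)
    (hG : ∀ (r : ℝ) (i j : ι),
      G r i j = ((∫ ρ in (0 : ℝ)..r, Real.sin (μ i * ρ) * Real.sin (μ j * ρ) : ℝ) : ℂ))
    (A : Matrix ι ι ℂ) (hA : Commute (diagonal fun i => (μ i : ℂ) ^ 2) A)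
    (hinv : ∀ r : ℝ, 0 ≤ r → IsUnit (A + G r))
    (s : ℝ → ι → ℂ) (hs : ∀ (r : ℝ) (i : ι), s r i = ((Real.sin (μ i * r) : ℝ) : ℂ))
    (v : ℝ → ι → ℂ) (hv : ∀ r : ℝ, v r = -((A + G r)⁻¹ *ᵥ s r))
    (V : ℝ → ℂ)
    (hV : ∀ r : ℝ, V r = 2 * deriv (fun t : ℝ => ∑ j, ((Real.sin (μ j * t) : ℝ) : ℂ) * v t j) r)
    (j : ι) :
    v 0 j = 0
      ∧ ContDiffOn ℝ 2 (fun r : ℝ => v r j) (Set.Ioi (0 : ℝ))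
      ∧ ∀ r : ℝ, 0 < r →
          -deriv (deriv (fun t : ℝ => v t j)) r + V r * v r j = ((μ j : ℂ)) ^ 2 * v r j := by
  obtain rfl : G = sineGram μ := by ext r i j; exact hG r i j
  obtain rfl : s = sineVector μ := by ext r i; exact hs r i
  obtain rfl : v = gramTransform (fun t => A + sineGram μ t) (sineVector μ) := funext hv
  have hM (r : ℝ) := hasDerivAt_add_sineGram μ r A
  have hs' (r : ℝ) : HasDerivAt (sineVectorDeriv μ)
      ((0 : ℝ → ℂ) r • sineVector μ r - diagonal (fun i => (μ i : ℂ) ^ 2) *ᵥ sineVector μ r) r := by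
    simpa using hasDerivAt_sineVectorDeriv μ r
  have hunit (r : ℝ) (hr : r ∈ Set.Ioi (0 : ℝ)) : IsUnit (A + sineGram μ r) := hinv r hr.le
  have hsmooth := contDiffOn_two_gramTransform isOpen_Ioi (fun r _ => hM r)
    (fun r _ => hasDerivAt_sineVector μ r) (fun r _ => hs' r) continuousOn_const
    (fun r _ => commutator_add_sineGram μ r hA) hunit
  refine ⟨?_, contDiffOn_pi.1 hsmooth j, fun r hr => ?_⟩
  · simp [gramTransform]
  · have heq := gramTransform_eigenvalue_equation isOpen_Ioi (fun t _ => hM t)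
      (fun t _ => hasDerivAt_sineVector μ t) (hs' r) (commutator_add_sineGram μ r hA) hunit hr
    rw [deriv_deriv_pi_apply isOpen_Ioi hr hsmooth, hV]
    simpa [mulVec_diagonal, dotProduct, sineVector] using congrFun heq j

/-- `v_j(0) = 0`, regularity, and the eigenvalue equation
`-v_j'' + V v_j = μ_j² v_j` on `(0,∞)`. -/
theorem stmt_12 (n : ℕ) (hn : 1 ≤ n) (μ : Fin n → ℝ)
    (hμpos : ∀ i, 0 < μ i) (hμanti : StrictAnti μ)
    (G : ℝ → Matrix (Fin n) (Fin n) ℂ)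
    (hG : ∀ (r : ℝ) (i j : Fin n),
      G r i j = ((∫ ρ in (0:ℝ)..r, Real.sin (μ i * ρ) * Real.sin (μ j * ρ) : ℝ) : ℂ))
    (a : Fin n → ℂ) (ha : ∀ j, a j ≠ 0 ∧ 0 ≤ (a j).re) (hinv : ∀ r : ℝ, 0 ≤ r → IsUnit (Matrix.diagonal a + G r))
    (s : ℝ → Fin n → ℂ) (hs : ∀ (r : ℝ) (i : Fin n), s r i = ((Real.sin (μ i * r) : ℝ) : ℂ))
    (v : ℝ → Fin n → ℂ) (hv : ∀ r : ℝ, v r = -((Matrix.diagonal a + G r)⁻¹ *ᵥ s r))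
    (V : ℝ → ℂ)
    (hV : ∀ r : ℝ, V r = 2 * deriv (fun t : ℝ => ∑ j, ((Real.sin (μ j * t) : ℝ) : ℂ) * v t j) r) :
    ∀ j : Fin n,
      v 0 j = 0
      ∧ ContDiffOn ℝ 2 (fun r : ℝ => v r j) (Set.Ioi (0:ℝ))
      ∧ ∀ r : ℝ, 0 < r →
          -deriv (deriv (fun t : ℝ => v t j)) r + V r * v r j = ((μ j : ℂ)) ^ 2 * v r j :=
    stmt_12_general μ G hG _ (commute_diagonal _ _) hinv s hs v hv V hV
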